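/- For every λ > 0 there exists a unique C³ function k : T → ℝ satisfying the kernel equation k_{xxx} + k_{yyy} + k_x + k_y = −λk on T together with the boundary conditions k(x,1) = 0, k(x,x) = 0 and k_x(x,x) = (λ/3)(1−x) for all x ∈ [0,1]. -/

import Mathlib

open MeasureTheory

noncomputable section

/-- The closed triangle `T = {(x, y) : 0 ≤ x ≤ y ≤ 1}`. -/
def T : Set (ℝ × ℝ) := {q : ℝ × ℝ | 0 ≤ q.1 ∧ q.1 ≤ q.2 ∧ q.2 ≤ 1}

/-- Partial derivative in the first variable. -/
def pdx (f : ℝ → ℝ → ℝ) (x y : ℝ) : ℝ := deriv (fun x' => f x' y) x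

/-- Partial derivative in the second variable. -/
def pdy (f : ℝ → ℝ → ℝ) (x y : ℝ) : ℝ := deriv (fun y' => f x y') y

/-- A controller kernel for `lam`: a C³ function with
`k_xxx + k_yyy + k_x + k_y = -lam k` on `T`, `k(x,1)=0`, `k(x,x)=0`,
`k_x(x,x) = (lam/3)(1-x)`. -/
def IsControllerKernel (lam : ℝ) (k : ℝ → ℝ → ℝ) : Prop :=
  ContDiff ℝ 3 (Function.uncurry k) ∧
  (∀ x y : ℝ, (x, y) ∈ T →
    pdx (pdx (pdx k)) x y + pdy (pdy (pdy k)) x y + pdx k x y + pdy k x y = -lam * k x y) ∧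
  (∀ x ∈ Set.Icc (0:ℝ) 1, k x 1 = 0) ∧
  (∀ x ∈ Set.Icc (0:ℝ) 1, k x x = 0) ∧
  (∀ x ∈ Set.Icc (0:ℝ) 1, pdx k x x = lam / 3 * (1 - x))

/-!
**Uniqueness.** The difference `h` of two kernels solves the homogeneous problem, and the equation
forces its full second-order jet to vanish on the diagonal. Hence the exponential transform
`u(y) = ∫₀ʸ exp (p x) h(x, y) dx` satisfies a third-order ODE `u''' + u' = (p³ + p - λ) u + b` with
`u(0) = u'(0) = u(1) = 0`, where `b` collects the unknown traces of `h` at `x = 0` and is `O(p²)`.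
For real large `p` a multiplier estimate bounds `u` by `b`, so the exponential moments of `h(·, y)`
grow only polynomially in `p`; this is impossible unless `h(·, y) = 0` on `(0, y)`.

**Existence.** In the variables `1 - y` and `y - x` the Taylor coefficients of a kernel at the
corner `(1, 1)` are determined recursively and grow at most geometrically. Their sum is written as a
matrix coefficient `ℓ (exp ((1 - y) A) exp ((y - x) B) f)` of two commuting shift operators, which
turns the differential equation into an algebraic identity for `A`, `B` and `f`.
-/

section PartialDerivatives

variable {F G : ℝ → ℝ → ℝ} {x y : ℝ}

lemma hasDerivAt_pdx (hF : DifferentiableAt ℝ (Function.uncurry F) (x, y)) :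
    HasDerivAt (fun x' => F x' y) (pdx F x y) x :=
  (hF.comp x (f := fun x' => (x', y)) (by fun_prop)).hasDerivAt

lemma hasDerivAt_pdy (hF : DifferentiableAt ℝ (Function.uncurry F) (x, y)) :
    HasDerivAt (fun y' => F x y') (pdy F x y) y :=
  (hF.comp y (f := fun y' => (x, y')) (by fun_prop)).hasDerivAt

lemma pdx_eq_fderiv (hF : DifferentiableAt ℝ (Function.uncurry F) (x, y)) :
    pdx F x y = fderiv ℝ (Function.uncurry F) (x, y) (1, 0) :=
  (hF.hasFDerivAt.comp_hasDerivAt (f := fun x' => (x', y)) x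
    ((hasDerivAt_id x).prodMk (hasDerivAt_const x y))).deriv

lemma pdy_eq_fderiv (hF : DifferentiableAt ℝ (Function.uncurry F) (x, y)) :
    pdy F x y = fderiv ℝ (Function.uncurry F) (x, y) (0, 1) :=
  (hF.hasFDerivAt.comp_hasDerivAt (f := fun y' => (x, y')) y
    ((hasDerivAt_const y x).prodMk (hasDerivAt_id y))).deriv

lemma hasDerivAt_diag (hF : DifferentiableAt ℝ (Function.uncurry F) (x, x)) :
    HasDerivAt (fun z => F z z) (pdx F x x + pdy F x x) x := by
  rw [pdx_eq_fderiv hF, pdy_eq_fderiv hF, ← map_add, Prod.mk_add_mk, add_zero, zero_add]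
  exact hF.hasFDerivAt.comp_hasDerivAt (f := fun z => (z, z)) x
    ((hasDerivAt_id x).prodMk (hasDerivAt_id x))

lemma uncurry_pdx_eq_fderiv (hF : Differentiable ℝ (Function.uncurry F)) :
    Function.uncurry (pdx F) = fun q => fderiv ℝ (Function.uncurry F) q (1, 0) :=
  funext fun q => pdx_eq_fderiv (hF q)

lemma uncurry_pdy_eq_fderiv (hF : Differentiable ℝ (Function.uncurry F)) :
    Function.uncurry (pdy F) = fun q => fderiv ℝ (Function.uncurry F) q (0, 1) :=
  funext fun q => pdy_eq_fderiv (hF q)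

lemma contDiff_pdx {m n : WithTop ℕ∞} (hF : ContDiff ℝ n (Function.uncurry F)) (hmn : m + 1 ≤ n) :
    ContDiff ℝ m (Function.uncurry (pdx F)) := by
  rw [uncurry_pdx_eq_fderiv ((hF.of_le (le_add_self.trans hmn)).differentiable one_ne_zero)]
  exact (hF.fderiv_right hmn).clm_apply contDiff_const

lemma contDiff_pdy {m n : WithTop ℕ∞} (hF : ContDiff ℝ n (Function.uncurry F)) (hmn : m + 1 ≤ n) :
    ContDiff ℝ m (Function.uncurry (pdy F)) := by
  rw [uncurry_pdy_eq_fderiv ((hF.of_le (le_add_self.trans hmn)).differentiable one_ne_zero)]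
  exact (hF.fderiv_right hmn).clm_apply contDiff_const

lemma continuous_pdx (hF : ContDiff ℝ 1 (Function.uncurry F)) :
    Continuous (Function.uncurry (pdx F)) :=
  (contDiff_pdx (m := 0) hF (by simp)).continuous

lemma continuous_pdy (hF : ContDiff ℝ 1 (Function.uncurry F)) :
    Continuous (Function.uncurry (pdy F)) :=
  (contDiff_pdy (m := 0) hF (by simp)).continuous

lemma pdx_pdy_comm (hF : ContDiff ℝ 2 (Function.uncurry F)) : pdx (pdy F) = pdy (pdx F) := by
  have hdiff : Differentiable ℝ (Function.uncurry F) := hF.differentiable two_ne_zero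
  have hdiff' : Differentiable ℝ (fderiv ℝ (Function.uncurry F)) :=
    (hF.fderiv_right (m := 1) (by norm_num)).differentiable one_ne_zero
  funext x y
  have hx : DifferentiableAt ℝ (Function.uncurry (pdx F)) (x, y) :=
    (contDiff_pdx (m := 1) hF (by norm_num)).differentiable one_ne_zero _
  have hy : DifferentiableAt ℝ (Function.uncurry (pdy F)) (x, y) :=
    (contDiff_pdy (m := 1) hF (by norm_num)).differentiable one_ne_zero _
  have hsymm : IsSymmSndFDerivAt ℝ (Function.uncurry F) (x, y) :=
    hF.contDiffAt.isSymmSndFDerivAt (by simp)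
  rw [pdx_eq_fderiv hy, pdy_eq_fderiv hx, uncurry_pdx_eq_fderiv hdiff, uncurry_pdy_eq_fderiv hdiff,
    fderiv_clm_apply (hdiff' _) (by fun_prop), fderiv_clm_apply (hdiff' _) (by fun_prop)]
  simpa using hsymm.eq (1, 0) (0, 1)

lemma pdx_sub (hF : Differentiable ℝ (Function.uncurry F))
    (hG : Differentiable ℝ (Function.uncurry G)) : pdx (F - G) = pdx F - pdx G :=
  funext₂ fun _ _ => ((hasDerivAt_pdx (hF _)).sub (hasDerivAt_pdx (hG _))).deriv

lemma pdy_sub (hF : Differentiable ℝ (Function.uncurry F))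
    (hG : Differentiable ℝ (Function.uncurry G)) : pdy (F - G) = pdy F - pdy G :=
  funext₂ fun _ _ => ((hasDerivAt_pdy (hF _)).sub (hasDerivAt_pdy (hG _))).deriv

end PartialDerivatives

lemma hasDerivAt_eq_zero_of_eqOn_zero {E : Type*} [NormedAddCommGroup E] [NormedSpace ℝ E]
    {f : ℝ → E} {f' : E} {s : Set ℝ} {x : ℝ} (hf : HasDerivAt f f' x) (hfs : ∀ z ∈ s, f z = 0)
    (hs : UniqueDiffOn ℝ s) (hx : x ∈ s) : f' = 0 :=
  (hs x hx).eq_deriv _ hf.hasDerivWithinAt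
    ((hasDerivWithinAt_const x s (0 : E)).congr hfs (hfs x hx))

/-- The differential operator `∂ₓ³ + ∂ᵧ³ + ∂ₓ + ∂ᵧ` of the kernel equation. -/
def kernelOp (k : ℝ → ℝ → ℝ) : ℝ → ℝ → ℝ :=
  pdx (pdx (pdx k)) + pdy (pdy (pdy k)) + pdx k + pdy k

lemma kernelOp_sub {F G : ℝ → ℝ → ℝ} (hF : ContDiff ℝ 3 (Function.uncurry F))
    (hG : ContDiff ℝ 3 (Function.uncurry G)) : kernelOp (F - G) = kernelOp F - kernelOp G := by
  have d {H : ℝ → ℝ → ℝ} (hH : ContDiff ℝ 3 (Function.uncurry H)) :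
      Differentiable ℝ (Function.uncurry H) := hH.differentiable three_ne_zero
  have dx {H : ℝ → ℝ → ℝ} (hH : ContDiff ℝ 3 (Function.uncurry H)) :
      ContDiff ℝ 2 (Function.uncurry (pdx H)) := contDiff_pdx hH (by norm_num)
  have dy {H : ℝ → ℝ → ℝ} (hH : ContDiff ℝ 3 (Function.uncurry H)) :
      ContDiff ℝ 2 (Function.uncurry (pdy H)) := contDiff_pdy hH (by norm_num)
  have d₂ {H : ℝ → ℝ → ℝ} (hH : ContDiff ℝ 2 (Function.uncurry H)) :
      Differentiable ℝ (Function.uncurry H) := hH.differentiable two_ne_zero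
  have dx₂ {H : ℝ → ℝ → ℝ} (hH : ContDiff ℝ 2 (Function.uncurry H)) :
      Differentiable ℝ (Function.uncurry (pdx H)) :=
    (contDiff_pdx (m := 1) hH (by norm_num)).differentiable one_ne_zero
  have dy₂ {H : ℝ → ℝ → ℝ} (hH : ContDiff ℝ 2 (Function.uncurry H)) :
      Differentiable ℝ (Function.uncurry (pdy H)) :=
    (contDiff_pdy (m := 1) hH (by norm_num)).differentiable one_ne_zero
  simp only [kernelOp, pdx_sub (d hF) (d hG), pdx_sub (d₂ (dx hF)) (d₂ (dx hG)),
    pdx_sub (dx₂ (dx hF)) (dx₂ (dx hG)), pdy_sub (d hF) (d hG), pdy_sub (d₂ (dy hF)) (d₂ (dy hG)),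
    pdy_sub (dy₂ (dy hF)) (dy₂ (dy hG))]
  abel

section ThirdOrderODE

open Set

/-- The energy obtained by multiplying `u''' + u'` by `(2 - y) u` and integrating by parts. The
weight `2 - y` decreases, which makes the contribution of `u' ^ 2` to the derivative positive. -/
def multiplierEnergy (u u' u'' : ℝ → ℝ) (y : ℝ) : ℝ :=
  (2 - y) * (u y * u'' y - u' y ^ 2 / 2 + u y ^ 2 / 2) + u y * u' y

variable {u u' u'' u''' b : ℝ → ℝ} {q B y : ℝ}

lemma hasDerivAt_multiplierEnergy (hu : HasDerivAt u (u' y) y) (hu' : HasDerivAt u' (u'' y) y)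
    (hu'' : HasDerivAt u'' (u''' y) y) :
    HasDerivAt (multiplierEnergy u u' u'')
      ((2 - y) * u y * (u''' y + u' y) + 3 / 2 * u' y ^ 2 - u y ^ 2 / 2) y := by
  have h := (((hasDerivAt_id y).const_sub 2).mul (((hu.mul hu'').sub ((hu'.pow 2).div_const 2)).add
    ((hu.pow 2).div_const 2))).add (hu.mul hu')
  refine h.congr_deriv ?_
  simp only [id_eq, Pi.add_apply, Pi.sub_apply, Pi.mul_apply, Pi.pow_apply]
  ring

lemma neg_le_weighted_quadratic {w v v' β σ : ℝ} (hw : 1 ≤ w) (hw' : w ≤ 2) (hq : 3 / 2 ≤ q)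
    (hβ : |β| ≤ B) (hσ : σ ^ 2 = 1) :
    -(2 / 3 * B ^ 2) ≤ w * v * (q * v + β) + 3 / 2 * v' ^ 2 - v ^ 2 / 2 + σ * B * v' := by
  have hβB : w * β ^ 2 ≤ 2 * B ^ 2 :=
    mul_le_mul hw' (sq_le_sq.2 (hβ.trans (le_abs_self B))) (sq_nonneg β) zero_le_two
  have hq' : 0 ≤ w * (q - 3 / 2) * v ^ 2 :=
    mul_nonneg (mul_nonneg (by linarith) (by linarith)) (sq_nonneg v)
  have hw'' : 0 ≤ (w - 1) * v ^ 2 := mul_nonneg (by linarith) (sq_nonneg v)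
  have hv : 0 ≤ w * (v + β / 2) ^ 2 := mul_nonneg (by linarith) (sq_nonneg _)
  have hv' : 0 ≤ 3 / 2 * v' ^ 2 + σ * B * v' + B ^ 2 / 6 := by
    have : 0 ≤ (3 * v' + σ * B) ^ 2 := sq_nonneg _
    have hσB : σ ^ 2 * B ^ 2 = B ^ 2 := by rw [hσ, one_mul]
    linarith
  linarith

lemma monotoneOn_multiplierEnergy_add {σ : ℝ} (hσ : σ ^ 2 = 1) (hq : 3 / 2 ≤ q)
    (hu_cont : ContinuousOn u (Icc 0 1)) (hu'_cont : ContinuousOn u' (Icc 0 1))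
    (hu''_cont : ContinuousOn u'' (Icc 0 1))
    (hu : ∀ y ∈ Ioo (0 : ℝ) 1, HasDerivAt u (u' y) y)
    (hu' : ∀ y ∈ Ioo (0 : ℝ) 1, HasDerivAt u' (u'' y) y)
    (hu'' : ∀ y ∈ Ioo (0 : ℝ) 1, HasDerivAt u'' (u''' y) y)
    (hode : ∀ y ∈ Ioo (0 : ℝ) 1, u''' y + u' y = q * u y + b y)
    (hb : ∀ y ∈ Ioo (0 : ℝ) 1, |b y| ≤ B) :
    MonotoneOn (fun y => multiplierEnergy u u' u'' y + 2 / 3 * B ^ 2 * y + σ * B * u y)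
      (Icc 0 1) := by
  refine monotoneOn_of_hasDerivWithinAt_nonneg (convex_Icc 0 1) ?_
    (fun y hy => ?_) (fun y hy => ?_)
    (f' := fun y => (2 - y) * u y * (q * u y + b y) + 3 / 2 * u' y ^ 2 - u y ^ 2 / 2
      + 2 / 3 * B ^ 2 + σ * B * u' y)
  · unfold multiplierEnergy
    fun_prop
  · rw [interior_Icc] at hy
    have h := ((hasDerivAt_multiplierEnergy (hu y hy) (hu' y hy) (hu'' y hy)).add
      ((hasDerivAt_id y).const_mul (2 / 3 * B ^ 2))).add ((hu y hy).const_mul (σ * B))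
    rw [hode y hy, mul_one] at h
    exact h.hasDerivWithinAt
  · rw [interior_Icc] at hy
    linarith [neg_le_weighted_quadratic (v := u y) (v' := u' y) (by linarith [hy.2] : 1 ≤ 2 - y)
      (by linarith [hy.1]) hq (hb y hy) hσ]

lemma abs_le_of_third_order_ode (hq : 3 / 2 ≤ q)
    (hu_cont : ContinuousOn u (Icc 0 1)) (hu'_cont : ContinuousOn u' (Icc 0 1))
    (hu''_cont : ContinuousOn u'' (Icc 0 1))
    (hu : ∀ y ∈ Ioo (0 : ℝ) 1, HasDerivAt u (u' y) y)
    (hu' : ∀ y ∈ Ioo (0 : ℝ) 1, HasDerivAt u' (u'' y) y)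
    (hu'' : ∀ y ∈ Ioo (0 : ℝ) 1, HasDerivAt u'' (u''' y) y)
    (hode : ∀ y ∈ Ioo (0 : ℝ) 1, u''' y + u' y = q * u y + b y)
    (hb : ∀ y ∈ Ioo (0 : ℝ) 1, |b y| ≤ B)
    (hu0 : u 0 = 0) (hu'0 : u' 0 = 0) (hu1 : u 1 = 0) (hy : y ∈ Icc (0 : ℝ) 1) :
    |u y| ≤ B / 3 := by
  rw [le_div_iff₀ zero_lt_three]
  refine le_of_forall_gt_imp_ge_of_dense fun B' hB' => ?_
  have hB'_pos : 0 < B' := ((abs_nonneg _).trans (hb (1 / 2) (by norm_num))).trans_lt hB'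
  have hmono {σ : ℝ} (hσ : σ ^ 2 = 1) := monotoneOn_multiplierEnergy_add hσ hq hu_cont hu'_cont
    hu''_cont hu hu' hu'' hode fun y hy => (hb y hy).trans hB'.le
  have hlower {σ : ℝ} (hσ : σ ^ 2 = 1) :
      0 ≤ multiplierEnergy u u' u'' y + 2 / 3 * B' ^ 2 * y + σ * B' * u y := by
    simpa [multiplierEnergy, hu0, hu'0] using hmono hσ (left_mem_Icc.2 zero_le_one) hy hy.1
  have hupper {σ : ℝ} (hσ : σ ^ 2 = 1) :
      multiplierEnergy u u' u'' y + 2 / 3 * B' ^ 2 * y + σ * B' * u y ≤ 2 / 3 * B' ^ 2 :=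
    calc _ ≤ multiplierEnergy u u' u'' 1 + 2 / 3 * B' ^ 2 * 1 + σ * B' * u 1 :=
          hmono hσ hy (right_mem_Icc.2 zero_le_one) hy.2
      _ = 2 / 3 * B' ^ 2 - u' 1 ^ 2 / 2 := by rw [multiplierEnergy, hu1]; ring
      _ ≤ 2 / 3 * B' ^ 2 := sub_le_self _ (by positivity)
  have h : B' * |u y| ≤ B' * (B' / 3) := by
    rw [← abs_of_pos hB'_pos, ← abs_mul, abs_of_pos hB'_pos, abs_le]
    constructor <;> linarith [hlower (σ := 1) (by norm_num), hupper (σ := 1) (by norm_num),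
      hlower (σ := -1) (by norm_num), hupper (σ := -1) (by norm_num)]
  linarith [le_of_mul_le_mul_left h hB'_pos]

end ThirdOrderODE

section LeibnizRule

open Set

variable {G : ℝ → ℝ → ℝ} (a y : ℝ)

lemma continuous_slice (hG : Continuous (Function.uncurry G)) : Continuous fun x => G x y :=
  hG.comp (Continuous.prodMk_left y)

lemma hasDerivAt_integral_fixed_limits (b : ℝ) (hG : ContDiff ℝ 1 (Function.uncurry G)) :
    HasDerivAt (fun z => ∫ x in a..b, G x z) (∫ x in a..b, pdy G x y) y := by
  have hdG : Continuous (Function.uncurry (pdy G)) := continuous_pdy hG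
  obtain ⟨C, hC⟩ := ((isCompact_uIcc (a := a) (b := b)).prod
    (isCompact_Icc (a := y - 1) (b := y + 1))).exists_bound_of_continuousOn hdG.continuousOn
  exact (intervalIntegral.hasDerivAt_integral_of_dominated_loc_of_deriv_le
    (F := fun z x => G x z) (F' := fun z x => pdy G x z) (bound := fun _ => C)
    (Icc_mem_nhds (sub_one_lt y) (lt_add_one y))
    (.of_forall fun z => (continuous_slice z hG.continuous).aestronglyMeasurable)
    ((continuous_slice y hG.continuous).intervalIntegrable _ _)
    (continuous_slice y hdG).aestronglyMeasurable
    (ae_of_all _ fun x hx z hz => hC (x, z) ⟨uIoc_subset_uIcc hx, hz⟩)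
    intervalIntegrable_const
    (ae_of_all _ fun x _ z _ => hasDerivAt_pdy (hG.differentiable one_ne_zero _))).2

lemma hasDerivAt_integral_moving_limit (hG : Continuous (Function.uncurry G)) :
    HasDerivAt (fun z => ∫ x in y..z, G x z) (G y y) y := by
  rw [hasDerivAt_iff_isLittleO, Asymptotics.isLittleO_iff]
  intro ε hε
  obtain ⟨δ, hδ, hball⟩ := Metric.continuousAt_iff.1 (hG.continuousAt (x := (y, y))) ε hε
  filter_upwards [Metric.ball_mem_nhds y hδ] with z hz
  have hbound : ∀ x ∈ uIoc y z, ‖G x z - G y y‖ ≤ ε := fun x hx => by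
    have hxy : dist x y ≤ dist z y := abs_sub_left_of_mem_uIcc (uIoc_subset_uIcc hx)
    exact (hball (x := (x, z)) (max_lt (hxy.trans_lt hz) hz)).le
  have hsub : ∫ x in y..z, (G x z - G y y) = (∫ x in y..z, G x z) - (z - y) * G y y := by
    rw [intervalIntegral.integral_sub ((continuous_slice z hG).intervalIntegrable _ _)
      intervalIntegrable_const, intervalIntegral.integral_const, smul_eq_mul]
  simpa only [intervalIntegral.integral_same, sub_zero, smul_eq_mul, hsub, Real.norm_eq_abs] using
    intervalIntegral.norm_integral_le_of_norm_le_const hbound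

lemma hasDerivAt_integral_leibniz (hG : ContDiff ℝ 1 (Function.uncurry G)) :
    HasDerivAt (fun z => ∫ x in a..z, G x z) ((∫ x in a..y, pdy G x y) + G y y) y := by
  have h := (hasDerivAt_integral_fixed_limits a y y hG).add
    (hasDerivAt_integral_moving_limit y hG.continuous)
  refine h.congr_of_eventuallyEq (.of_forall fun z => ?_)
  have hintegrable (c d : ℝ) : IntervalIntegrable (fun x => G x z) volume c d :=
    (continuous_slice z hG.continuous).intervalIntegrable _ _
  exact (intervalIntegral.integral_add_adjacent_intervals (hintegrable _ _) (hintegrable _ _)).symm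

end LeibnizRule

section ExpTransform

open Set

/-- The exponential transform `∫₀ʸ exp (p x) g(x, y) dx` in the first variable. -/
def expTransform (p : ℝ) (g : ℝ → ℝ → ℝ) (y : ℝ) : ℝ := ∫ x in (0 : ℝ)..y, Real.exp (p * x) * g x y

/-- The traces at `x = 0` produced when `∂ₓ³ + ∂ₓ` is integrated by parts against `exp (p x)`. -/
def leftBoundaryTerm (p : ℝ) (g : ℝ → ℝ → ℝ) (y : ℝ) : ℝ :=
  pdx (pdx g) 0 y - p * pdx g 0 y + (p ^ 2 + 1) * g 0 y

variable (p : ℝ) {f g : ℝ → ℝ → ℝ} {y : ℝ}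

lemma continuous_exp_mul_slice (hg : Continuous (Function.uncurry g)) :
    Continuous fun x => Real.exp (p * x) * g x y :=
  (by fun_prop : Continuous fun x => Real.exp (p * x)).mul (continuous_slice y hg)

lemma expTransform_add (hf : Continuous (Function.uncurry f))
    (hg : Continuous (Function.uncurry g)) :
    expTransform p (f + g) y = expTransform p f y + expTransform p g y := by
  simp only [expTransform, Pi.add_apply, mul_add]
  exact intervalIntegral.integral_add ((continuous_exp_mul_slice p hf).intervalIntegrable _ _)
    ((continuous_exp_mul_slice p hg).intervalIntegrable _ _)

lemma continuous_expTransform (hg : Continuous (Function.uncurry g)) :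
    Continuous (expTransform p g) := by
  refine intervalIntegral.continuous_parametric_intervalIntegral_of_continuous
    (f := fun y x => Real.exp (p * x) * g x y) ?_ continuous_id
  exact (by fun_prop : Continuous fun q : ℝ × ℝ => Real.exp (p * q.2)).mul (hg.comp continuous_swap)

lemma hasDerivAt_expTransform (hg : ContDiff ℝ 1 (Function.uncurry g)) (hgy : g y y = 0) :
    HasDerivAt (expTransform p g) (expTransform p (pdy g) y) y := by
  have hG : ContDiff ℝ 1 (Function.uncurry fun x y => Real.exp (p * x) * g x y) :=
    (by fun_prop : ContDiff ℝ 1 fun q : ℝ × ℝ => Real.exp (p * q.1)).mul hg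
  have hpdy (x : ℝ) :
      pdy (fun x y => Real.exp (p * x) * g x y) x y = Real.exp (p * x) * pdy g x y :=
    ((hasDerivAt_pdy (hg.differentiable one_ne_zero _)).const_mul _).deriv
  have h := hasDerivAt_integral_leibniz 0 y hG
  simp only [hpdy, hgy, mul_zero, add_zero] at h
  exact h

lemma expTransform_pdx (hg : ContDiff ℝ 1 (Function.uncurry g)) (hgy : g y y = 0) :
    expTransform p (pdx g) y = -g 0 y - p * expTransform p g y := by
  have hexp (x : ℝ) : HasDerivAt (fun x => Real.exp (p * x)) (p * Real.exp (p * x)) x := by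
    simpa [mul_comm] using ((hasDerivAt_id x).const_mul p).exp
  have h := intervalIntegral.integral_mul_deriv_eq_deriv_mul (a := 0) (b := y)
    (fun x _ => hexp x) (fun x _ => hasDerivAt_pdx (hg.differentiable one_ne_zero (x, y)))
    (Continuous.intervalIntegrable (by fun_prop) _ _)
    ((continuous_slice y (continuous_pdx hg)).intervalIntegrable _ _)
  simp only [expTransform, h, hgy, mul_assoc, intervalIntegral.integral_const_mul, mul_zero,
    Real.exp_zero, one_mul, zero_sub]

lemma expTransform_kernelOp (hg : ContDiff ℝ 3 (Function.uncurry g)) (hgy : g y y = 0)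
    (hgx : pdx g y y = 0) (hgxx : pdx (pdx g) y y = 0) :
    expTransform p (kernelOp g) y = expTransform p (pdy (pdy (pdy g))) y
      + expTransform p (pdy g) y - (p ^ 3 + p) * expTransform p g y - leftBoundaryTerm p g y := by
  have hx : ContDiff ℝ 2 (Function.uncurry (pdx g)) := contDiff_pdx hg (by norm_num)
  have hxx : ContDiff ℝ 1 (Function.uncurry (pdx (pdx g))) := contDiff_pdx hx (by norm_num)
  have hxxx : Continuous (Function.uncurry (pdx (pdx (pdx g)))) := continuous_pdx hxx
  have hy : ContDiff ℝ 2 (Function.uncurry (pdy g)) := contDiff_pdy hg (by norm_num)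
  have hyy : ContDiff ℝ 1 (Function.uncurry (pdy (pdy g))) := contDiff_pdy hy (by norm_num)
  have hyyy : Continuous (Function.uncurry (pdy (pdy (pdy g)))) := continuous_pdy hyy
  rw [kernelOp, expTransform_add p (f := pdx (pdx (pdx g)) + pdy (pdy (pdy g)) + pdx g)
      ((hxxx.add hyyy).add hx.continuous) hy.continuous,
    expTransform_add p (f := pdx (pdx (pdx g)) + pdy (pdy (pdy g))) (hxxx.add hyyy) hx.continuous,
    expTransform_add p hxxx hyyy, expTransform_pdx p hxx hgxx,
    expTransform_pdx p (hx.of_le one_le_two) hgx, expTransform_pdx p (hg.of_le (by norm_num)) hgy,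
    leftBoundaryTerm]
  ring

lemma exists_abs_leftBoundaryTerm_le (hg : ContDiff ℝ 2 (Function.uncurry g)) :
    ∃ C, ∀ p, 1 ≤ p → ∀ y ∈ Icc (0 : ℝ) 1, |leftBoundaryTerm p g y| ≤ C * p ^ 2 := by
  have hbound {f : ℝ → ℝ → ℝ} (hf : Continuous (Function.uncurry f)) :
      ∃ C, ∀ y ∈ Icc (0 : ℝ) 1, |f 0 y| ≤ C :=
    isCompact_Icc.exists_bound_of_continuousOn (f := f 0)
      (hf.comp (Continuous.prodMk_right 0)).continuousOn
  have hx : ContDiff ℝ 1 (Function.uncurry (pdx g)) := contDiff_pdx hg (by norm_num)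
  obtain ⟨C₀, hC₀⟩ := hbound hg.continuous
  obtain ⟨C₁, hC₁⟩ := hbound hx.continuous
  obtain ⟨C₂, hC₂⟩ := hbound (continuous_pdx hx)
  refine ⟨C₂ + C₁ + 2 * C₀, fun p hp y hy => ?_⟩
  have hp_sq : 1 ≤ p ^ 2 := one_le_pow₀ hp
  have hp_le : p ≤ p ^ 2 := le_self_pow₀ hp two_ne_zero
  calc |leftBoundaryTerm p g y|
      ≤ |pdx (pdx g) 0 y| + |p * pdx g 0 y| + |(p ^ 2 + 1) * g 0 y| :=
        (abs_add_le _ _).trans (add_le_add_left (abs_sub _ _) _)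
    _ = |pdx (pdx g) 0 y| + p * |pdx g 0 y| + (p ^ 2 + 1) * |g 0 y| := by
        rw [abs_mul, abs_mul, abs_of_pos (by linarith : 0 < p),
          abs_of_pos (by linarith : 0 < p ^ 2 + 1)]
    _ ≤ C₂ * p ^ 2 + p ^ 2 * C₁ + (p ^ 2 + p ^ 2) * C₀ := by
        gcongr
        · exact (hC₂ y hy).trans
            (le_mul_of_one_le_right ((abs_nonneg _).trans (hC₂ y hy)) hp_sq)
        · exact hC₁ y hy
        · exact hC₀ y hy
    _ = (C₂ + C₁ + 2 * C₀) * p ^ 2 := by ring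

end ExpTransform

section ExponentialMoments

open Set Filter Topology

variable {E : Type*} [NormedAddCommGroup E] [NormedSpace ℝ E] {m : ℝ → E} {a b c s t : ℝ}

lemma tendsto_exp_neg_exp_mul_of_neg (hc : c < 0) :
    Tendsto (fun n : ℕ => Real.exp (-Real.exp (n * c))) atTop (𝓝 1) := by
  have h : Tendsto (fun n : ℕ => -Real.exp (n * c)) atTop (𝓝 (-0)) :=
    (Real.tendsto_exp_atBot.comp (tendsto_natCast_atTop_atTop.atTop_mul_const_of_neg hc)).neg
  simpa [Function.comp_def] using (Real.continuous_exp.tendsto _).comp h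

lemma tendsto_exp_neg_exp_mul_of_pos (hc : 0 < c) :
    Tendsto (fun n : ℕ => Real.exp (-Real.exp (n * c))) atTop (𝓝 0) :=
  Real.tendsto_exp_neg_atTop_nhds_zero.comp
    (Real.tendsto_exp_atTop.comp (tendsto_natCast_atTop_atTop.atTop_mul_const hc))

lemma aestronglyMeasurable_exp_neg_exp_smul (hm : IntervalIntegrable m volume a b) (c t : ℝ) :
    AEStronglyMeasurable (fun x => Real.exp (-Real.exp (c * (x - t))) • m x)
      (volume.restrict (uIoc a b)) :=
  (by fun_prop : Continuous fun x => Real.exp (-Real.exp (c * (x - t)))).aestronglyMeasurable.smul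
    hm.aestronglyMeasurable_restrict_uIoc

lemma tendsto_integral_exp_neg_exp_smul (hm : IntervalIntegrable m volume a b)
    (ht : t ∈ Icc a b) :
    Tendsto (fun n : ℕ => ∫ x in a..b, Real.exp (-Real.exp (n * (x - t))) • m x) atTop
      (𝓝 (∫ x in a..t, m x)) := by
  rw [← intervalIntegral.integral_indicator ht]
  refine intervalIntegral.tendsto_integral_filter_of_dominated_convergence (fun x => ‖m x‖)
    (.of_forall fun n => aestronglyMeasurable_exp_neg_exp_smul hm n t)
    (.of_forall fun n => ae_of_all _ fun x _ => ?_) hm.norm ?_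
  · rw [norm_smul, Real.norm_of_nonneg (Real.exp_nonneg _)]
    exact mul_le_of_le_one_left (norm_nonneg _)
      (Real.exp_le_one_iff.2 (neg_nonpos.2 (Real.exp_nonneg _)))
  · filter_upwards [Measure.ae_ne volume t] with x hx _
    rcases lt_or_gt_of_ne hx with hlt | hgt
    · rw [indicator_of_mem (show x ∈ {x | x ≤ t} from hlt.le)]
      simpa using (tendsto_exp_neg_exp_mul_of_neg (sub_neg.2 hlt)).smul_const (m x)
    · rw [indicator_of_notMem (show x ∉ {x | x ≤ t} from hgt.not_ge)]
      simpa using (tendsto_exp_neg_exp_mul_of_pos (sub_pos.2 hgt)).smul_const (m x)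

lemma hasSum_pow_div_factorial (r : ℝ) :
    HasSum (fun k : ℕ => r ^ k / (k.factorial : ℝ)) (Real.exp r) := by
  rw [Real.exp_eq_exp_ℝ]
  exact NormedSpace.expSeries_div_hasSum_exp r

lemma hasSum_integral_exp_neg_exp_smul (hm : IntervalIntegrable m volume a b) (c t : ℝ) :
    HasSum (fun k : ℕ => ((-1) ^ k / (k.factorial : ℝ) * Real.exp (-(k * c * t))) •
        ∫ x in a..b, Real.exp (k * c * x) • m x)
      (∫ x in a..b, Real.exp (-Real.exp (c * (x - t))) • m x) := by
  have hpow (k : ℕ) (x : ℝ) : (-Real.exp (c * (x - t))) ^ k / (k.factorial : ℝ)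
      = (-1) ^ k / (k.factorial : ℝ) * Real.exp (-(k * c * t)) * Real.exp (k * c * x) := by
    rw [neg_pow, ← Real.exp_nat_mul, mul_assoc, ← Real.exp_add]
    ring_nf
  have hcont : Continuous fun x => Real.exp (c * (x - t)) := by fun_prop
  have h := intervalIntegral.hasSum_integral_of_dominated_convergence (μ := volume)
    (F := fun (k : ℕ) x => ((-Real.exp (c * (x - t))) ^ k / (k.factorial : ℝ)) • m x)
    (fun k x => Real.exp (c * (x - t)) ^ k / (k.factorial : ℝ) * ‖m x‖)
    (fun k => ((hcont.neg.pow k).div_const _).aestronglyMeasurable.smul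
      hm.aestronglyMeasurable_restrict_uIoc)
    (fun k => ae_of_all _ fun x _ => by
      rw [norm_smul, norm_div, norm_pow, norm_neg, Real.norm_of_nonneg (Real.exp_nonneg _),
        Real.norm_of_nonneg (Nat.cast_nonneg _)])
    (ae_of_all _ fun x _ => (hasSum_pow_div_factorial _).summable.mul_right _)
    (by
      simp only [tsum_mul_right, (hasSum_pow_div_factorial _).tsum_eq]
      exact hm.norm.continuousOn_mul hcont.rexp.continuousOn)
    (ae_of_all _ fun x _ => (hasSum_pow_div_factorial _).smul_const (m x))
  simpa only [hpow, mul_smul, intervalIntegral.integral_smul] using h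

lemma norm_inv_factorial_mul_exp_smul_le {C : ℝ} {v : E} {k : ℕ} (hc : 0 ≤ c) (hst : s ≤ t)
    (hv : ‖v‖ ≤ C * Real.exp (s * ((k + 1 : ℕ) * c))) :
    ‖((-1) ^ (k + 1) / ((k + 1).factorial : ℝ) * Real.exp (-((k + 1 : ℕ) * c * t))) • v‖ ≤
      C * Real.exp (-((t - s) * c)) * (1 ^ k / (k.factorial : ℝ)) := by
  have hC : 0 ≤ C := nonneg_of_mul_nonneg_left ((norm_nonneg _).trans hv) (Real.exp_pos _)
  have hfactorial : (k.factorial : ℝ) ≤ (k + 1).factorial := by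
    exact_mod_cast Nat.factorial_le k.le_succ
  have hk : c ≤ (k + 1 : ℕ) * c := le_mul_of_one_le_left hc (by simp)
  calc ‖((-1) ^ (k + 1) / ((k + 1).factorial : ℝ) * Real.exp (-((k + 1 : ℕ) * c * t))) • v‖
      = 1 / ((k + 1).factorial : ℝ) * (Real.exp (-((k + 1 : ℕ) * c * t)) * ‖v‖) := by
        rw [norm_smul, norm_mul, norm_div, norm_pow, norm_neg, norm_one, one_pow,
          Real.norm_of_nonneg (Nat.cast_nonneg _), Real.norm_of_nonneg (Real.exp_nonneg _),
          mul_assoc]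
    _ ≤ 1 / ((k + 1).factorial : ℝ) * (Real.exp (-((k + 1 : ℕ) * c * t)) *
        (C * Real.exp (s * ((k + 1 : ℕ) * c)))) := by gcongr
    _ = 1 / ((k + 1).factorial : ℝ) * (C * Real.exp (-((t - s) * ((k + 1 : ℕ) * c)))) := by
        rw [mul_left_comm _ C, ← Real.exp_add]
        ring_nf
    _ ≤ 1 / (k.factorial : ℝ) * (C * Real.exp (-((t - s) * c))) := by gcongr
    _ = C * Real.exp (-((t - s) * c)) * (1 ^ k / (k.factorial : ℝ)) := by rw [one_pow, mul_comm]

lemma norm_integral_exp_neg_exp_smul_sub_le {C : ℝ} (hm : IntervalIntegrable m volume a b)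
    (hc : 0 ≤ c) (hst : s ≤ t) (hC : ∀ k : ℕ, 1 ≤ k →
      ‖∫ x in a..b, Real.exp (k * c * x) • m x‖ ≤ C * Real.exp (s * (k * c))) :
    ‖(∫ x in a..b, Real.exp (-Real.exp (c * (x - t))) • m x) - ∫ x in a..b, m x‖ ≤
      C * Real.exp (-((t - s) * c)) * Real.exp 1 := by
  have htail := (hasSum_nat_add_iff' 1).2 (hasSum_integral_exp_neg_exp_smul hm c t)
  have hmajorant := (hasSum_pow_div_factorial 1).mul_left (C * Real.exp (-((t - s) * c)))
  simpa using htail.norm_le_of_bounded hmajorant fun k =>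
    norm_inv_factorial_mul_exp_smul_le hc hst (hC _ k.succ_pos)

lemma integral_eq_of_exp_moments_isBigO (hm : IntervalIntegrable m volume a b)
    (ht : t ∈ Icc a b) (hst : s < t)
    (hO : (fun n : ℕ => ∫ x in a..b, Real.exp (n * x) • m x) =O[atTop]
      fun n : ℕ => Real.exp (s * n)) :
    ∫ x in a..t, m x = ∫ x in a..b, m x := by
  obtain ⟨C, hC⟩ := hO.bound
  obtain ⟨N, hN⟩ := eventually_atTop.1 hC
  have hbound : ∀ᶠ n : ℕ in atTop,
      ‖(∫ x in a..b, Real.exp (-Real.exp (n * (x - t))) • m x) - ∫ x in a..b, m x‖ ≤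
        C * Real.exp (-((t - s) * n)) * Real.exp 1 := by
    filter_upwards [eventually_ge_atTop N] with n hn
    refine norm_integral_exp_neg_exp_smul_sub_le hm n.cast_nonneg hst.le fun k hk => ?_
    simpa using hN (k * n) (hn.trans (Nat.le_mul_of_pos_left n hk))
  have hzero : Tendsto (fun n : ℕ => C * Real.exp (-((t - s) * n)) * Real.exp 1) atTop (𝓝 0) := by
    have hexp := Real.tendsto_exp_neg_atTop_nhds_zero.comp
      (tendsto_natCast_atTop_atTop.const_mul_atTop (sub_pos.2 hst))
    simpa using (hexp.const_mul C).mul_const (Real.exp 1)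
  exact tendsto_nhds_unique (tendsto_integral_exp_neg_exp_smul hm ht)
    (tendsto_iff_norm_sub_tendsto_zero.2 (squeeze_zero' (.of_forall fun _ => norm_nonneg _)
      hbound hzero))

lemma eq_zero_of_exp_moments_isBigO [CompleteSpace E] (hm : Continuous m) (has : a ≤ s)
    (ht : t ∈ Ioo s b)
    (hO : (fun n : ℕ => ∫ x in a..b, Real.exp (n * x) • m x) =O[atTop]
      fun n : ℕ => Real.exp (s * n)) :
    m t = 0 := by
  have hintegrable (u v : ℝ) : IntervalIntegrable m volume u v := hm.intervalIntegrable u v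
  have hFTC : HasDerivAt (fun r => ∫ x in a..r, m x) (m t) t :=
    intervalIntegral.integral_hasDerivAt_right (hintegrable a t)
      hm.stronglyMeasurable.stronglyMeasurableAtFilter hm.continuousAt
  have hconst : (fun r => ∫ x in a..r, m x) =ᶠ[𝓝 t] fun _ => ∫ x in a..b, m x :=
    eventuallyEq_of_mem (Ioo_mem_nhds ht.1 ht.2) fun r hr =>
      integral_eq_of_exp_moments_isBigO (hintegrable a b) ⟨has.trans hr.1.le, hr.2.le⟩ hr.1 hO
  exact hFTC.unique ((hasDerivAt_const t _).congr_of_eventuallyEq hconst)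

end ExponentialMoments

section HomogeneousProblem

open Set Filter

/-- A solution of the kernel problem with homogeneous boundary data: the difference of two
controller kernels for the same `lam`. -/
structure IsHomogeneousKernel (lam : ℝ) (h : ℝ → ℝ → ℝ) : Prop where
  contDiff : ContDiff ℝ 3 (Function.uncurry h)
  kernelOp_eq : ∀ x y : ℝ, (x, y) ∈ T → kernelOp h x y = -lam * h x y
  top : ∀ x ∈ Icc (0 : ℝ) 1, h x 1 = 0
  diag : ∀ x ∈ Icc (0 : ℝ) 1, h x x = 0
  pdx_diag : ∀ x ∈ Icc (0 : ℝ) 1, pdx h x x = 0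

lemma IsControllerKernel.sub {lam : ℝ} {k k' : ℝ → ℝ → ℝ} (hk : IsControllerKernel lam k)
    (hk' : IsControllerKernel lam k') : IsHomogeneousKernel lam (k - k') := by
  obtain ⟨hcont, hpde, htop, hdiag, hdx⟩ := hk
  obtain ⟨hcont', hpde', htop', hdiag', hdx'⟩ := hk'
  refine ⟨hcont.sub hcont', fun x y hxy => ?_, fun x hx => ?_, fun x hx => ?_, fun x hx => ?_⟩
  · rw [kernelOp_sub hcont hcont', Pi.sub_apply, Pi.sub_apply, Pi.sub_apply, Pi.sub_apply, mul_sub]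
    exact congrArg₂ (· - ·) (hpde x y hxy) (hpde' x y hxy)
  · rw [Pi.sub_apply, Pi.sub_apply, htop x hx, htop' x hx, sub_zero]
  · rw [Pi.sub_apply, Pi.sub_apply, hdiag x hx, hdiag' x hx, sub_zero]
  · rw [pdx_sub (hcont.differentiable three_ne_zero) (hcont'.differentiable three_ne_zero),
      Pi.sub_apply, Pi.sub_apply, hdx x hx, hdx' x hx, sub_self]

namespace IsHomogeneousKernel

variable {lam x y : ℝ} {h : ℝ → ℝ → ℝ}

lemma contDiff_pdx (hh : IsHomogeneousKernel lam h) : ContDiff ℝ 2 (Function.uncurry (pdx h)) :=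
  _root_.contDiff_pdx hh.contDiff (by norm_num)

lemma contDiff_pdy (hh : IsHomogeneousKernel lam h) : ContDiff ℝ 2 (Function.uncurry (pdy h)) :=
  _root_.contDiff_pdy hh.contDiff (by norm_num)

lemma contDiff_pdx_pdx (hh : IsHomogeneousKernel lam h) :
    ContDiff ℝ 1 (Function.uncurry (pdx (pdx h))) :=
  _root_.contDiff_pdx hh.contDiff_pdx (by norm_num)

lemma contDiff_pdy_pdx (hh : IsHomogeneousKernel lam h) :
    ContDiff ℝ 1 (Function.uncurry (pdy (pdx h))) :=
  _root_.contDiff_pdy hh.contDiff_pdx (by norm_num)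

lemma contDiff_pdy_pdy (hh : IsHomogeneousKernel lam h) :
    ContDiff ℝ 1 (Function.uncurry (pdy (pdy h))) :=
  _root_.contDiff_pdy hh.contDiff_pdy (by norm_num)

lemma pdy_diag (hh : IsHomogeneousKernel lam h) (hx : x ∈ Icc (0 : ℝ) 1) : pdy h x x = 0 := by
  have h_diag := hasDerivAt_eq_zero_of_eqOn_zero
    (hasDerivAt_diag (hh.contDiff.differentiable three_ne_zero _)) hh.diag
    (uniqueDiffOn_Icc zero_lt_one) hx
  linarith [hh.pdx_diag x hx]

lemma pdx_pdx_add_pdy_pdx_diag (hh : IsHomogeneousKernel lam h) (hx : x ∈ Icc (0 : ℝ) 1) :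
    pdx (pdx h) x x + pdy (pdx h) x x = 0 :=
  hasDerivAt_eq_zero_of_eqOn_zero (hasDerivAt_diag (hh.contDiff_pdx.differentiable two_ne_zero _))
    hh.pdx_diag (uniqueDiffOn_Icc zero_lt_one) hx

lemma pdy_pdx_add_pdy_pdy_diag (hh : IsHomogeneousKernel lam h) (hx : x ∈ Icc (0 : ℝ) 1) :
    pdy (pdx h) x x + pdy (pdy h) x x = 0 := by
  rw [← pdx_pdy_comm (hh.contDiff.of_le (by norm_num))]
  exact hasDerivAt_eq_zero_of_eqOn_zero
    (hasDerivAt_diag (hh.contDiff_pdy.differentiable two_ne_zero _)) (fun z hz => hh.pdy_diag hz)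
    (uniqueDiffOn_Icc zero_lt_one) hx

lemma pdx_pdy_pdy_add_pdy_pdy_pdy_diag (hh : IsHomogeneousKernel lam h) (hx : x ∈ Icc (0 : ℝ) 1) :
    pdx (pdy (pdy h)) x x + pdy (pdy (pdy h)) x x = 0 := by
  have hxx := hasDerivAt_diag (hh.contDiff_pdx_pdx.differentiable one_ne_zero (x, x))
  have hxy := hasDerivAt_diag (hh.contDiff_pdy_pdx.differentiable one_ne_zero (x, x))
  have hyy := hasDerivAt_diag (hh.contDiff_pdy_pdy.differentiable one_ne_zero (x, x))
  have h_xx_xy := hasDerivAt_eq_zero_of_eqOn_zero (hxx.add hxy)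
    (fun z hz => hh.pdx_pdx_add_pdy_pdx_diag hz) (uniqueDiffOn_Icc zero_lt_one) hx
  have h_xy_yy := hasDerivAt_eq_zero_of_eqOn_zero (hxy.add hyy)
    (fun z hz => hh.pdy_pdx_add_pdy_pdy_diag hz) (uniqueDiffOn_Icc zero_lt_one) hx
  have h_pde : pdx (pdx (pdx h)) x x + pdy (pdy (pdy h)) x x + pdx h x x + pdy h x x
      = -lam * h x x := hh.kernelOp_eq x x ⟨hx.1, le_rfl, hx.2⟩
  rw [hh.pdx_diag x hx, hh.pdy_diag hx, hh.diag x hx] at h_pde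
  have h_xxy : pdx (pdy (pdx h)) = pdy (pdx (pdx h)) := pdx_pdy_comm hh.contDiff_pdx
  have h_xyy : pdx (pdy (pdy h)) = pdy (pdy (pdx h)) := by
    rw [pdx_pdy_comm hh.contDiff_pdy, pdx_pdy_comm (hh.contDiff.of_le (by norm_num))]
  rw [h_xxy] at h_xx_xy h_xy_yy
  rw [h_xyy] at h_xy_yy ⊢
  linarith

lemma pdx_pdx_top (hh : IsHomogeneousKernel lam h) (hx : x ∈ Icc (0 : ℝ) 1) :
    pdx (pdx h) x 1 = 0 :=
  hasDerivAt_eq_zero_of_eqOn_zero (hasDerivAt_pdx (hh.contDiff_pdx.differentiable two_ne_zero _))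
    (fun _ hz => hasDerivAt_eq_zero_of_eqOn_zero
      (hasDerivAt_pdx (hh.contDiff.differentiable three_ne_zero _)) hh.top
      (uniqueDiffOn_Icc zero_lt_one) hz)
    (uniqueDiffOn_Icc zero_lt_one) hx

lemma pdy_pdy_diag (hh : IsHomogeneousKernel lam h) (hx : x ∈ Icc (0 : ℝ) 1) :
    pdy (pdy h) x x = 0 := by
  have hderiv (z : ℝ) := hasDerivAt_diag (hh.contDiff_pdy_pdy.differentiable one_ne_zero (z, z))
  have hconst : ∀ z ∈ Icc (0 : ℝ) 1, pdy (pdy h) z z = pdy (pdy h) 0 0 :=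
    constant_of_has_deriv_right_zero (fun z _ => (hderiv z).continuousAt.continuousWithinAt)
      fun z hz => by
        rw [← hh.pdx_pdy_pdy_add_pdy_pdy_pdy_diag (Ico_subset_Icc_self hz)]
        exact (hderiv z).hasDerivWithinAt
  have one_mem : (1 : ℝ) ∈ Icc (0 : ℝ) 1 := right_mem_Icc.2 zero_le_one
  linarith [hconst x hx, hconst 1 one_mem, hh.pdx_pdx_top one_mem,
    hh.pdx_pdx_add_pdy_pdx_diag one_mem, hh.pdy_pdx_add_pdy_pdy_diag one_mem]

lemma pdx_pdx_diag (hh : IsHomogeneousKernel lam h) (hx : x ∈ Icc (0 : ℝ) 1) :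
    pdx (pdx h) x x = 0 := by
  linarith [hh.pdx_pdx_add_pdy_pdx_diag hx, hh.pdy_pdx_add_pdy_pdy_diag hx, hh.pdy_pdy_diag hx]

lemma expTransform_ode (hh : IsHomogeneousKernel lam h) (p : ℝ) (hy : y ∈ Icc (0 : ℝ) 1) :
    expTransform p (pdy (pdy (pdy h))) y + expTransform p (pdy h) y
      = (p ^ 3 + p - lam) * expTransform p h y + leftBoundaryTerm p h y := by
  have hpde : expTransform p (kernelOp h) y = -lam * expTransform p h y := by
    unfold expTransform
    rw [← intervalIntegral.integral_const_mul]
    refine intervalIntegral.integral_congr fun x hx => ?_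
    rw [uIcc_of_le hy.1] at hx
    simp only [hh.kernelOp_eq x y ⟨hx.1, hx.2, hy.2⟩, mul_left_comm]
  rw [expTransform_kernelOp p hh.contDiff (hh.diag y hy) (hh.pdx_diag y hy)
    (hh.pdx_pdx_diag hy)] at hpde
  linarith

lemma expTransform_one (hh : IsHomogeneousKernel lam h) (p : ℝ) : expTransform p h 1 = 0 := by
  refine (intervalIntegral.integral_congr fun x hx => ?_).trans intervalIntegral.integral_zero
  rw [uIcc_of_le zero_le_one] at hx
  simp only [hh.top x hx, mul_zero]

lemma exists_abs_expTransform_le (hh : IsHomogeneousKernel lam h) :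
    ∃ C, ∀ p, 1 ≤ p → lam + 1 ≤ p → ∀ y ∈ Icc (0 : ℝ) 1, |expTransform p h y| ≤ C * p ^ 2 := by
  obtain ⟨C, hC⟩ := exists_abs_leftBoundaryTerm_le (g := h) (hh.contDiff.of_le (by norm_num))
  refine ⟨C / 3, fun p hp hp_lam y hy => ?_⟩
  have hq : 3 / 2 ≤ p ^ 3 + p - lam := by linarith [one_le_pow₀ hp (n := 3)]
  have hIcc {z : ℝ} (hz : z ∈ Ioo (0 : ℝ) 1) : z ∈ Icc (0 : ℝ) 1 := Ioo_subset_Icc_self hz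
  have hzero (g : ℝ → ℝ → ℝ) : expTransform p g 0 = 0 := intervalIntegral.integral_same
  calc |expTransform p h y| ≤ C * p ^ 2 / 3 :=
        abs_le_of_third_order_ode hq
          (continuous_expTransform p hh.contDiff.continuous).continuousOn
          (continuous_expTransform p hh.contDiff_pdy.continuous).continuousOn
          (continuous_expTransform p hh.contDiff_pdy_pdy.continuous).continuousOn
          (fun z hz => hasDerivAt_expTransform p (hh.contDiff.of_le (by norm_num))
            (hh.diag z (hIcc hz)))
          (fun z hz => hasDerivAt_expTransform p (hh.contDiff_pdy.of_le one_le_two)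
            (hh.pdy_diag (hIcc hz)))
          (fun z hz => hasDerivAt_expTransform p hh.contDiff_pdy_pdy (hh.pdy_pdy_diag (hIcc hz)))
          (fun z hz => hh.expTransform_ode p (hIcc hz)) (fun z hz => hC p hp z (hIcc hz))
          (hzero h) (hzero _) (hh.expTransform_one p) hy
    _ = C / 3 * p ^ 2 := by ring

lemma exp_moments_isBigO (hh : IsHomogeneousKernel lam h) (hy : y ∈ Icc (0 : ℝ) 1) {s : ℝ}
    (hs : 0 < s) :
    (fun n : ℕ => ∫ x in (0 : ℝ)..y, Real.exp (n * x) • h x y) =O[atTop]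
      fun n : ℕ => Real.exp (s * n) := by
  obtain ⟨C, hC⟩ := hh.exists_abs_expTransform_le
  have hpoly : (fun n : ℕ => expTransform n h y) =O[atTop] fun n : ℕ => (n : ℝ) ^ 2 := by
    refine .of_bound C ?_
    filter_upwards [tendsto_natCast_atTop_atTop.eventually_ge_atTop (1 : ℝ),
      tendsto_natCast_atTop_atTop.eventually_ge_atTop (lam + 1)] with n hn hn_lam
    rw [Real.norm_of_nonneg (sq_nonneg (n : ℝ))]
    exact hC n hn hn_lam y hy
  exact hpoly.trans ((isLittleO_pow_exp_pos_mul_atTop 2 hs).comp_tendsto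
    tendsto_natCast_atTop_atTop).isBigO

lemma eq_zero_of_mem_Ioo (hh : IsHomogeneousKernel lam h) (hy : y ≤ 1) (hx : x ∈ Ioo 0 y) :
    h x y = 0 :=
  eq_zero_of_exp_moments_isBigO (m := fun x => h x y) (t := x)
    (continuous_slice y hh.contDiff.continuous) (half_pos hx.1).le ⟨half_lt_self hx.1, hx.2⟩
    (hh.exp_moments_isBigO ⟨(hx.1.trans hx.2).le, hy⟩ (half_pos hx.1))

lemma eq_zero (hh : IsHomogeneousKernel lam h) (hxy : (x, y) ∈ T) : h x y = 0 := by
  obtain ⟨hx, hxy, hy⟩ : 0 ≤ x ∧ x ≤ y ∧ y ≤ 1 := hxy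
  rcases (hx.trans hxy).eq_or_lt with rfl | hy_pos
  · rw [hxy.antisymm hx]
    exact hh.diag 0 (left_mem_Icc.2 zero_le_one)
  · have hcl : EqOn (fun x => h x y) 0 (closure (Ioo 0 y)) :=
      EqOn.closure (fun _ hz => hh.eq_zero_of_mem_Ioo hy hz)
        (continuous_slice y hh.contDiff.continuous) continuous_zero
    exact hcl (by rw [closure_Ioo hy_pos.ne]; exact ⟨hx, hxy⟩)

end IsHomogeneousKernel

lemma IsControllerKernel.eq_of_mem_T {lam x y : ℝ} {k k' : ℝ → ℝ → ℝ}
    (hk : IsControllerKernel lam k) (hk' : IsControllerKernel lam k') (hxy : (x, y) ∈ T) :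
    k x y = k' x y :=
  sub_eq_zero.1 ((hk.sub hk').eq_zero hxy)

end HomogeneousProblem

section Existence

open NormedSpace BoundedContinuousFunction

section ExpMatrixCoeff

variable {E : Type*} [NormedAddCommGroup E] [NormedSpace ℝ E]

/-- The matrix coefficient `ℓ (exp ((1 - y) A) exp ((y - x) B) f)`: for commuting `A` and `B`, the
function whose Taylor coefficient at `(1 - y) ^ i / i! * (y - x) ^ j / j!` is `ℓ (A ^ i (B ^ j f))`.
-/
def expMatrixCoeff (A B : E →L[ℝ] E) (ℓ : E →L[ℝ] ℝ) (f : E) (x y : ℝ) : ℝ :=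
  ℓ ((exp ((1 - y) • A) * exp ((y - x) • B)) f)

variable {A B : E →L[ℝ] E} (ℓ : E →L[ℝ] ℝ) (f g : E)

lemma expMatrixCoeff_add :
    expMatrixCoeff A B ℓ (f + g) = expMatrixCoeff A B ℓ f + expMatrixCoeff A B ℓ g := by
  funext x y
  simp only [expMatrixCoeff, map_add, Pi.add_apply]

lemma expMatrixCoeff_smul (c : ℝ) :
    expMatrixCoeff A B ℓ (c • f) = c • expMatrixCoeff A B ℓ f := by
  funext x y
  simp only [expMatrixCoeff, map_smul, Pi.smul_apply]

variable [CompleteSpace E]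

lemma contDiff_expMatrixCoeff {n : WithTop ℕ∞} :
    ContDiff ℝ n (Function.uncurry (expMatrixCoeff A B ℓ f)) := by
  have hexp : ContDiff ℝ n (exp : (E →L[ℝ] E) → E →L[ℝ] E) :=
    contDiff_iff_contDiffAt.2 fun L => (exp_analytic (𝕂 := ℝ) L).contDiffAt
  have hA : ContDiff ℝ n fun q : ℝ × ℝ => exp ((1 - q.2) • A) := hexp.comp (by fun_prop)
  have hB : ContDiff ℝ n fun q : ℝ × ℝ => exp ((q.2 - q.1) • B) := hexp.comp (by fun_prop)
  exact ℓ.contDiff.comp ((hA.mul hB).clm_apply contDiff_const)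

lemma pdx_expMatrixCoeff :
    pdx (expMatrixCoeff A B ℓ f) = expMatrixCoeff A B ℓ ((-B) f) := by
  funext x y
  have hB : HasDerivAt (fun x => exp ((y - x) • B)) (-(exp ((y - x) • B) * B)) x :=
    (hasDerivAt_exp_smul_const (𝕂 := ℝ) B (y - x)).comp_const_sub y x
  have h := ℓ.hasFDerivAt.comp_hasDerivAt x
    ((hB.const_mul (exp ((1 - y) • A))).clm_apply (hasDerivAt_const x f))
  refine Eq.trans h.deriv ?_
  simp [expMatrixCoeff]

lemma pdy_expMatrixCoeff (hAB : Commute A B) :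
    pdy (expMatrixCoeff A B ℓ f) = expMatrixCoeff A B ℓ ((B - A) f) := by
  funext x y
  have hB : HasDerivAt (fun y => exp ((y - x) • B)) (exp ((y - x) • B) * B) y :=
    (hasDerivAt_exp_smul_const (𝕂 := ℝ) B (y - x)).comp_sub_const y x
  have hA : HasDerivAt (fun y => exp ((1 - y) • A)) (-(exp ((1 - y) • A) * A)) y :=
    (hasDerivAt_exp_smul_const (𝕂 := ℝ) A (1 - y)).comp_const_sub 1 y
  have h := ℓ.hasFDerivAt.comp_hasDerivAt y ((hA.mul hB).clm_apply (hasDerivAt_const y f))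
  have hcomm (v : E) : A (exp ((y - x) • B) v) = exp ((y - x) • B) (A v) :=
    congrArg (fun L : E →L[ℝ] E => L v) ((hAB.smul_right (y - x)).exp_right).eq
  refine Eq.trans h.deriv ?_
  simp only [neg_mul, _root_.add_apply, _root_.neg_apply, mul_apply_eq_comp, hcomm, Pi.mul_apply,
    map_zero, add_zero, map_add, map_neg, expMatrixCoeff, _root_.sub_apply, map_sub]
  ring

lemma kernelOp_expMatrixCoeff (hAB : Commute A B) :
    kernelOp (expMatrixCoeff A B ℓ f) = expMatrixCoeff A B ℓ (((B - A) ^ 3 - B ^ 3 - A) f) := by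
  simp only [kernelOp, pdx_expMatrixCoeff, pdy_expMatrixCoeff ℓ _ hAB, ← expMatrixCoeff_add]
  congr 1
  simp only [_root_.neg_apply, map_neg, neg_neg, _root_.sub_apply, map_sub, pow_succ, pow_zero,
    one_mul, mul_apply_eq_comp]
  abel

lemma hasSum_exp_smul_apply (L : E →L[ℝ] E) (c : ℝ) :
    HasSum (fun n : ℕ => (n.factorial : ℝ)⁻¹ * (c ^ n * ℓ ((L ^ n) f))) (ℓ (exp (c • L) f)) := by
  simpa [smul_pow] using
    (exp_series_hasSum_exp' (𝕂 := ℝ) (c • L)).mapL (ℓ.comp (ContinuousLinearMap.apply ℝ E f))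

lemma hasSum_expMatrixCoeff_diag (x : ℝ) :
    HasSum (fun n : ℕ => (n.factorial : ℝ)⁻¹ * ((1 - x) ^ n * ℓ ((A ^ n) f)))
      (expMatrixCoeff A B ℓ f x x) := by
  simpa [expMatrixCoeff] using hasSum_exp_smul_apply ℓ f A (1 - x)

lemma hasSum_expMatrixCoeff_top (x : ℝ) :
    HasSum (fun n : ℕ => (n.factorial : ℝ)⁻¹ * ((1 - x) ^ n * ℓ ((B ^ n) f)))
      (expMatrixCoeff A B ℓ f x 1) := by
  simpa [expMatrixCoeff] using hasSum_exp_smul_apply ℓ f B (1 - x)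

end ExpMatrixCoeff

section Shifts

/-- The left shift in the first index, on bounded double sequences. -/
def shiftFst : (ℕ × ℕ →ᵇ ℝ) →L[ℝ] (ℕ × ℕ →ᵇ ℝ) :=
  compContinuousCLM ℝ ℝ ⟨fun n => (n.1 + 1, n.2), continuous_of_discreteTopology⟩

/-- The left shift in the second index, on bounded double sequences. -/
def shiftSnd : (ℕ × ℕ →ᵇ ℝ) →L[ℝ] (ℕ × ℕ →ᵇ ℝ) :=
  compContinuousCLM ℝ ℝ ⟨fun n => (n.1, n.2 + 1), continuous_of_discreteTopology⟩

variable (f : ℕ × ℕ →ᵇ ℝ) (m i j : ℕ)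

@[simp]
lemma shiftFst_apply : shiftFst f (i, j) = f (i + 1, j) := rfl

@[simp]
lemma shiftSnd_apply : shiftSnd f (i, j) = f (i, j + 1) := rfl

lemma iterate_shiftFst_apply : (shiftFst^[m] f) (i, j) = f (i + m, j) := by
  induction m generalizing i with
  | zero => rfl
  | succ m ih =>
    rw [Function.iterate_succ_apply', shiftFst_apply, ih, add_right_comm, add_assoc]

lemma iterate_shiftSnd_apply : (shiftSnd^[m] f) (i, j) = f (i, j + m) := by
  induction m generalizing j with
  | zero => rfl
  | succ m ih =>
    rw [Function.iterate_succ_apply', shiftSnd_apply, ih, add_right_comm, add_assoc]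

lemma commute_shiftFst_smul_shiftSnd (c : ℝ) : Commute shiftFst (c • shiftSnd) := by
  ext f ⟨i, j⟩
  simp

end Shifts

/-- The geometric growth rate, in the power of `y - x`, that is factored out of the Taylor
coefficients of the kernel; large enough for the recursion of `kernelCoeff` to preserve the bound
`1`. -/
def kernelRate (lam : ℝ) : ℝ := 1 + (2 + |lam|) / 3

lemma kernelRate_pos (lam : ℝ) : 0 < kernelRate lam := by
  unfold kernelRate; positivity

/-- The rescaled Taylor coefficients of the kernel at the corner `(1, 1)`: with
`M = kernelRate lam`, the coefficient of `(1 - y) ^ i / i! * (M * (y - x)) ^ j / j!`. Columns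
`j = 0` and `j = 1` encode the data on the diagonal, row `i = 0` the condition at `y = 1`, and the
last clause is the kernel equation solved for its term of highest order in `y - x`. -/
def kernelCoeff (lam : ℝ) : ℕ → ℕ → ℝ
  | _, 0 => 0
  | i, 1 => if i = 1 then -(lam / (3 * kernelRate lam)) else 0
  | 0, _ + 2 => 0
  | i + 1, j + 2 => kernelCoeff lam (i + 2) (j + 1) / kernelRate lam -
      (kernelCoeff lam (i + 3) j + kernelCoeff lam (i + 1) j - lam * kernelCoeff lam i j) /
        (3 * kernelRate lam ^ 2)

lemma kernelCoeff_zero_left (lam : ℝ) : ∀ j, kernelCoeff lam 0 j = 0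
  | 0 | 1 | _ + 2 => by simp [kernelCoeff]

lemma abs_div_sub_div_kernelRate_le_one {lam a b c d : ℝ} (ha : |a| ≤ 1) (hb : |b| ≤ 1)
    (hc : |c| ≤ 1) (hd : |d| ≤ 1) :
    |a / kernelRate lam - (b + c - lam * d) / (3 * kernelRate lam ^ 2)| ≤ 1 := by
  have hM := kernelRate_pos lam
  have hnum : |b + c - lam * d| ≤ 3 * (kernelRate lam - 1) :=
    calc |b + c - lam * d| ≤ |b| + |c| + |lam * d| :=
          (abs_sub _ _).trans (add_le_add_left (abs_add_le _ _) _)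
      _ = |b| + |c| + |lam| * |d| := by rw [abs_mul]
      _ ≤ 1 + 1 + |lam| * 1 := by gcongr
      _ = 3 * (kernelRate lam - 1) := by unfold kernelRate; ring
  calc |a / kernelRate lam - (b + c - lam * d) / (3 * kernelRate lam ^ 2)|
      ≤ |a| / kernelRate lam + |b + c - lam * d| / (3 * kernelRate lam ^ 2) := by
        refine (abs_sub _ _).trans_eq ?_
        rw [abs_div, abs_div, abs_of_pos hM,
          abs_of_pos (by positivity : 0 < 3 * kernelRate lam ^ 2)]
    _ ≤ 1 / kernelRate lam + 3 * (kernelRate lam - 1) / (3 * kernelRate lam ^ 2) := by gcongr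
    _ = 1 - ((kernelRate lam - 1) / kernelRate lam) ^ 2 := by field_simp; ring
    _ ≤ 1 := sub_le_self _ (sq_nonneg _)

lemma abs_kernelCoeff_le_one (lam : ℝ) : ∀ j i, |kernelCoeff lam i j| ≤ 1
  | 0, i => by simp [kernelCoeff]
  | 1, i => by
    have hM := kernelRate_pos lam
    rw [kernelCoeff]
    split_ifs
    · rw [abs_neg, abs_div, abs_of_pos (by positivity : 0 < 3 * kernelRate lam),
        div_le_one (by positivity)]
      unfold kernelRate
      linarith [abs_nonneg lam]
    · simp
  | _ + 2, 0 => by simp [kernelCoeff]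
  | j + 2, i + 1 => by
    rw [kernelCoeff]
    exact abs_div_sub_div_kernelRate_le_one (abs_kernelCoeff_le_one lam (j + 1) _)
      (abs_kernelCoeff_le_one lam j _) (abs_kernelCoeff_le_one lam j _)
      (abs_kernelCoeff_le_one lam j _)

/-- `kernelCoeff` as a bounded double sequence. -/
def kernelArray (lam : ℝ) : ℕ × ℕ →ᵇ ℝ :=
  ofNormedAddCommGroupDiscrete (fun n => kernelCoeff lam n.1 n.2) 1 fun n =>
    abs_kernelCoeff_le_one lam n.2 n.1

@[simp]
lemma kernelArray_apply (lam : ℝ) (i j : ℕ) : kernelArray lam (i, j) = kernelCoeff lam i j := rfl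

/-- The controller kernel, as the sum of its Taylor series at the corner `(1, 1)`. -/
def taylorKernel (lam : ℝ) : ℝ → ℝ → ℝ :=
  expMatrixCoeff shiftFst (kernelRate lam • shiftSnd) (evalCLM ℝ (0, 0)) (kernelArray lam)

lemma shift_kernelArray (lam : ℝ) :
    ((kernelRate lam • shiftSnd - shiftFst) ^ 3 - (kernelRate lam • shiftSnd) ^ 3 - shiftFst)
      (kernelArray lam) = -lam • kernelArray lam := by
  have hM := (kernelRate_pos lam).ne'
  ext ⟨i, j⟩
  simp only [pow_succ, pow_zero, one_mul, _root_.sub_apply, mul_apply_eq_comp, _root_.smul_apply,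
    map_sub, map_smul, coe_sub, coe_smul, smul_eq_mul, Pi.sub_apply, shiftSnd_apply,
    kernelArray_apply, shiftFst_apply, kernelCoeff, neg_mul]
  field_simp
  ring

lemma kernelOp_taylorKernel (lam : ℝ) :
    kernelOp (taylorKernel lam) = -lam • taylorKernel lam := by
  rw [taylorKernel, kernelOp_expMatrixCoeff _ _ (commute_shiftFst_smul_shiftSnd _),
    shift_kernelArray, expMatrixCoeff_smul]

lemma taylorKernel_top (lam x : ℝ) : taylorKernel lam x 1 = 0 := by
  refine (hasSum_expMatrixCoeff_top _ _ x).unique ?_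
  simp [smul_pow, iterate_shiftSnd_apply, kernelCoeff_zero_left]

lemma taylorKernel_diag (lam x : ℝ) : taylorKernel lam x x = 0 := by
  refine (hasSum_expMatrixCoeff_diag _ _ x).unique ?_
  simp [iterate_shiftFst_apply, kernelCoeff]

lemma pdx_taylorKernel_diag (lam x : ℝ) : pdx (taylorKernel lam) x x = lam / 3 * (1 - x) := by
  have hM := (kernelRate_pos lam).ne'
  rw [taylorKernel, pdx_expMatrixCoeff]
  refine (hasSum_expMatrixCoeff_diag _ _ x).unique ?_
  convert hasSum_ite_eq 1 (lam / 3 * (1 - x)) using 2 with n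
  rcases eq_or_ne n 1 with rfl | hn
  · simp only [Nat.factorial_one, Nat.cast_one, inv_one, pow_one, _root_.neg_apply,
      _root_.smul_apply, map_neg, map_smul, evalCLM_apply, smul_eq_mul, shiftFst_apply, zero_add,
      shiftSnd_apply, kernelArray_apply, kernelCoeff, ↓reduceIte, mul_neg, neg_neg, one_mul]
    field_simp
  · simp [iterate_shiftFst_apply, kernelCoeff, hn]

theorem isControllerKernel_taylorKernel (lam : ℝ) : IsControllerKernel lam (taylorKernel lam) :=
  ⟨contDiff_expMatrixCoeff _ _, fun x y _ => congrFun₂ (kernelOp_taylorKernel lam) x y,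
    fun x _ => taylorKernel_top lam x, fun x _ => taylorKernel_diag lam x,
    fun x _ => pdx_taylorKernel_diag lam x⟩

end Existence

theorem controller_kernel_exists_unique_general (lam : ℝ) :
    ∃ k : ℝ → ℝ → ℝ, IsControllerKernel lam k ∧
      ∀ k' : ℝ → ℝ → ℝ, IsControllerKernel lam k' →
        ∀ x y : ℝ, (x, y) ∈ T → k' x y = k x y :=
  ⟨taylorKernel lam, isControllerKernel_taylorKernel lam, fun _ hk' _ _ hxy =>
    hk'.eq_of_mem_T (isControllerKernel_taylorKernel lam) hxy⟩

/-- Existence and uniqueness (as a function on `T`) of the controller kernel. -/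
theorem controller_kernel_exists_unique (lam : ℝ) (hlam : 0 < lam) :
    ∃ k : ℝ → ℝ → ℝ, IsControllerKernel lam k ∧
      ∀ k' : ℝ → ℝ → ℝ, IsControllerKernel lam k' →
        ∀ x y : ℝ, (x, y) ∈ T → k' x y = k x y :=
  controller_kernel_exists_unique_general lam
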